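/- arXiv:0812.3355 — 2 statements merged into one kernel-verified Lean document; each statement's English description precedes it below -/
import Mathlib

section
/- Let F be a field, let Y be an integral scheme of finite type over F, let E/F be a field extension, let X = Y ×_{Spec F} Spec E, and let π: X → Y be the projection morphism. Then for every irreducible closed subset Z ⊆ Y, every irreducible component of π^{-1}(Z) has the same dimension as Z (dimension meaning the topological Krull dimension of the subspace). -/
open AlgebraicGeometry CategoryTheory CategoryTheory.Limits TopologicalSpace

universe u

namespace ThcrDM

variable {X : Scheme.{u}}

/-- The `n`-th iterate (`n : ℤ`) of an automorphism of a scheme, on points. -/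
noncomputable def iter (σ : X ≅ X) : ℤ → X → X
  | Int.ofNat n => (fun x => σ.hom.base x)^[n]
  | Int.negSucc n => (fun x => σ.inv.base x)^[n + 1]

/-- The σ-orbit `{σ^n(x) : n ∈ ℤ}` of a point `x`. -/
noncomputable def orbit (σ : X ≅ X) (x : X) : Set X :=
  Set.range fun n : ℤ => iter σ n x

/-- A subset `Z` is σ-invariant if `σ(Z) = Z`. -/
def SigmaInv (σ : X ≅ X) (Z : Set X) : Prop :=
  σ.hom.base '' Z = Z

/-- A σ-invariant closed subset is σ-irreducible if it admits no decomposition into two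
σ-invariant closed subsets both properly contained in it. -/
def SigmaIrred (σ : X ≅ X) (Z : Set X) : Prop :=
  IsClosed Z ∧ SigmaInv σ Z ∧
    ∀ Z₁ Z₂ : Set X, IsClosed Z₁ → IsClosed Z₂ → SigmaInv σ Z₁ → SigmaInv σ Z₂ →
      Z = Z₁ ∪ Z₂ → ¬(Z₁ ⊂ Z ∧ Z₂ ⊂ Z)

/-- `W` is a maximal σ-irreducible closed subset of `Z`, i.e. a maximal element, under
inclusion, of the set of proper σ-irreducible closed subsets of `Z`. -/
def MaxSigmaIrredIn (σ : X ≅ X) (Z W : Set X) : Prop :=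
  SigmaIrred σ W ∧ W ⊂ Z ∧ ∀ W' : Set X, SigmaIrred σ W' → W' ⊂ Z → W ⊆ W' → W' = W

/-- `(X, σ)` has good dense orbits if the set of points with dense σ-orbit is open. -/
def GoodDenseOrbits (σ : X ≅ X) : Prop :=
  IsOpen { x : X | Dense (orbit σ x) }

/-- `(X, σ)` is ordinary if for every σ-irreducible closed subset `Z`, the set of points of `Z`
whose σ-orbit is dense in `Z` is open in `Z` (in the subspace topology). -/
def Ordinary (σ : X ≅ X) : Prop :=
  ∀ Z : Set X, SigmaIrred σ Z →
    ∃ U : Set X, IsOpen U ∧ { z | z ∈ Z ∧ Z ⊆ closure (orbit σ z) } = U ∩ Z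

/-- `(X, σ)` is countable-avoiding if every σ-irreducible closed subset has either finitely
many or uncountably many maximal σ-irreducible closed subsets. -/
def CountableAvoiding (σ : X ≅ X) : Prop :=
  ∀ Z : Set X, SigmaIrred σ Z →
    { W : Set X | MaxSigmaIrredIn σ Z W }.Finite ∨
      ¬ { W : Set X | MaxSigmaIrredIn σ Z W }.Countable

/-- A subset `Z` has codimension one if every irreducible component of `Z` (i.e. every maximal
irreducible subset of `Z`) has coheight 1 in the poset of irreducible closed subsets of `X`. -/
def CodimOne (Z : Set X) : Prop :=
  ∀ T : IrreducibleCloseds X,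
    Maximal (fun s : Set X => s ⊆ Z ∧ IsIrreducible s) ↑T → Order.coheight T = 1

/-- Powers of an automorphism. -/
noncomputable def isoPow (σ : X ≅ X) : ℕ → (X ≅ X)
  | 0 => Iso.refl X
  | n + 1 => isoPow σ n ≪≫ σ

/-- The automorphism of the function field induced by an automorphism of an irreducible
scheme. -/
noncomputable def functionFieldAut [IrreducibleSpace X] (σ : X ≅ X) :
    X.functionField ⟶ X.functionField :=
  eqToHom (congrArg X.presheaf.stalk (genericPoint_eq_of_isOpenImmersion σ.hom).symm) ≫
    σ.hom.stalkMap (genericPoint X)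

/-- The canonical map from the base ring into the function field of an irreducible
scheme over it. -/
noncomputable def constMap [IrreducibleSpace X] {k : CommRingCat.{u}} (p : X ⟶ Spec k) :
    k ⟶ X.functionField :=
  haveI : Nonempty (⊤ : X.Opens) := ⟨⟨Classical.arbitrary X, trivial⟩⟩
  (Scheme.ΓSpecIso k).inv ≫ p.appTop ≫ X.germToFunctionField ⊤

section Helpers

open TensorProduct

theorem dim_eq_of_integral {A B : Type*} [CommRing A] [CommRing B] (f : A →+* B)
    (hf : Function.Injective f) (hi : f.IsIntegral) : ringKrullDim A = ringKrullDim B := by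
  algebraize [f]
  have hsm : StrictMono (PrimeSpectrum.comap f) := fun I J h ↦
    Ideal.IsIntegral.comap_lt_comap (R := A) (I := I.asIdeal) (J := J.asIdeal) h
  have key := Order.coheight_eq_of_strictMono (PrimeSpectrum.comap f) hsm (by
    intro a b hab
    obtain ⟨Q, hQ, hQp, hQc⟩ := Ideal.exists_ideal_over_prime_of_isIntegral b.asIdeal a.asIdeal
      (show Ideal.comap (algebraMap A B) a.asIdeal ≤ _ from hab.le)
    have hc : PrimeSpectrum.comap f ⟨Q, hQp⟩ = b := PrimeSpectrum.ext hQc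
    refine ⟨⟨Q, hQp⟩, lt_of_le_of_ne hQ ?_, hc⟩
    rintro rfl
    exact hab.ne hc)
  have hs : Function.Surjective (PrimeSpectrum.comap f) := by
    intro b
    obtain ⟨Q, hQ, hQp, hQc⟩ := Ideal.exists_ideal_over_prime_of_isIntegral b.asIdeal (⊥ : Ideal B)
      (by
        intro x hx
        have hx' : f x = 0 := hx
        rw [(map_eq_zero_iff f hf).1 hx']; exact b.asIdeal.zero_mem)
    exact ⟨⟨Q, hQp⟩, PrimeSpectrum.ext hQc⟩
  rw [ringKrullDim, ringKrullDim, Order.krullDim_eq_iSup_coheight, Order.krullDim_eq_iSup_coheight,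
    ← hs.iSup_comp]
  simp_rw [key]

theorem map_integral {F P R E : Type*} [Field F] [CommRing P] [CommRing R] [CommRing E]
    [Algebra F P] [Algebra F R] [Algebra F E] (g : P →ₐ[F] R) (hg : g.IsIntegral) :
    (Algebra.TensorProduct.map g (AlgHom.id F E)).toRingHom.IsIntegral := by
  intro x
  induction x using TensorProduct.induction_on with
  | zero => exact RingHom.isIntegralElem_zero _
  | add x y hx hy => exact RingHom.IsIntegralElem.add _ hx hy
  | tmul r e =>
    have h : r ⊗ₜ[F] e = (r ⊗ₜ[F] (1 : E)) * ((1 : R) ⊗ₜ[F] e) := by simp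
    rw [h]
    refine RingHom.IsIntegralElem.mul _ ?_ ?_
    · obtain ⟨p, hp, hpr⟩ := hg r
      refine ⟨p.map (Algebra.TensorProduct.includeLeft : P →ₐ[F] P ⊗[F] E).toRingHom, hp.map _, ?_⟩
      rw [Polynomial.eval₂_map]
      have h2 : ((Algebra.TensorProduct.map g (AlgHom.id F E)).toRingHom.comp
          (Algebra.TensorProduct.includeLeft : P →ₐ[F] P ⊗[F] E).toRingHom) =
          (Algebra.TensorProduct.includeLeft : R →ₐ[F] R ⊗[F] E).toRingHom.comp g.toRingHom := by
        ext x; simp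
      rw [h2]
      have := Polynomial.hom_eval₂ p g.toRingHom
        (Algebra.TensorProduct.includeLeft : R →ₐ[F] R ⊗[F] E).toRingHom r
      rw [hpr, map_zero] at this
      exact this.symm
    · have : (1 : R) ⊗ₜ[F] e = (Algebra.TensorProduct.map g (AlgHom.id F E)).toRingHom (1 ⊗ₜ e) := by
        simp
      rw [this]
      exact RingHom.isIntegralElem_map _

theorem flat_field (P L : Type*) [CommRing P] [IsDomain P] [Field L] [Algebra P L]
    [FaithfulSMul P L] : Module.Flat P L := by
  let K := FractionRing P
  let : Algebra K L := FractionRing.liftAlgebra P L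
  have : IsScalarTower P K L := FractionRing.isScalarTower_liftAlgebra P L
  have : Module.Flat P K := IsLocalization.flat K (nonZeroDivisors P)
  have : Module.Flat K L := Module.Flat.of_free
  exact Module.Flat.trans P K L

theorem map_mul_inj {F P R E : Type*} [Field F] [CommRing P] [IsDomain P] [CommRing R] [IsDomain R]
    [CommRing E]
    [Algebra F P] [Algebra F R] [Algebra F E] [IsDomain (P ⊗[F] E)]
    (g : P →ₐ[F] R) (hg : Function.Injective g)
    (f : P ⊗[F] E) (hf : f ≠ 0) (y : R ⊗[F] E)
    (h : Algebra.TensorProduct.map g (AlgHom.id F E) f * y = 0) : y = 0 := by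
  let L := FractionRing R
  let gL : P →ₐ[F] L := (IsScalarTower.toAlgHom F R L).comp g
  have hgL : Function.Injective gL := (IsFractionRing.injective R L).comp hg
  let : Algebra P L := gL.toRingHom.toAlgebra
  have : IsScalarTower F P L := IsScalarTower.of_algebraMap_eq' gL.comp_algebraMap.symm
  have : FaithfulSMul P L := (faithfulSMul_iff_algebraMap_injective P L).2 hgL
  have : Module.Flat P L := flat_field P L
  let φ := Algebra.TensorProduct.map (IsScalarTower.toAlgHom F R L) (AlgHom.id F E)
  have hφ : Function.Injective φ := 
    Module.Flat.rTensor_preserves_injective_linearMap (M := E)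
      (IsScalarTower.toAlgHom F R L).toLinearMap (IsFractionRing.injective R L)
  apply hφ
  rw [map_zero]
  have h1 : φ (Algebra.TensorProduct.map g (AlgHom.id F E) f) * φ y = 0 := by
    rw [← map_mul, h, map_zero]
  let c := TensorProduct.AlgebraTensorModule.cancelBaseChange F P L L E
  let m : (P ⊗[F] E) →ₗ[P] (P ⊗[F] E) := LinearMap.mulLeft P f
  have hm : Function.Injective m := fun a b hab ↦ mul_left_cancel₀ hf hab
  have hm' := Module.Flat.lTensor_preserves_injective_linearMap (M := L) m hm
  have key0 : ∀ (f w : P ⊗[F] E) (l : L), c (l ⊗ₜ (f * w)) =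
      φ (Algebra.TensorProduct.map g (AlgHom.id F E) f) * c (l ⊗ₜ w) := by
    intro f w l
    induction f using TensorProduct.induction_on with
    | zero => simp
    | add x y hx hy => simp only [map_add, add_mul, hx, hy, TensorProduct.tmul_add]
    | tmul p e =>
      induction w using TensorProduct.induction_on with
      | zero => simp
      | add x y hx hy => simp only [map_add, mul_add, hx, hy, TensorProduct.tmul_add]
      | tmul p' e' =>
        have hp : ∀ p : P, algebraMap P L p = algebraMap R L (g p) := fun _ ↦ rfl
        simp only [c, φ, Algebra.TensorProduct.tmul_mul_tmul, Algebra.TensorProduct.map_tmul,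
          TensorProduct.AlgebraTensorModule.cancelBaseChange_tmul, Algebra.smul_def, hp, map_mul,
          AlgHom.id_apply, IsScalarTower.toAlgHom_apply, mul_assoc]
  have key : ∀ z, c (m.lTensor L z) = φ (Algebra.TensorProduct.map g (AlgHom.id F E) f) * c z := by
    intro z
    induction z using TensorProduct.induction_on with
    | zero => simp
    | add x y hx hy => simp only [map_add, mul_add, hx, hy]
    | tmul l w => exact key0 f w l
  have h2 : c (m.lTensor L (c.symm (φ y))) = 0 := by rw [key, c.apply_symm_apply, h1]
  have h3 : c.symm (φ y) = 0 := hm' (by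
    rw [map_zero]; exact c.map_eq_zero_iff.1 h2)
  exact c.symm.map_eq_zero_iff.1 h3

theorem alg_main (F E R : Type u) [Field F] [Field E] [CommRing R] [IsDomain R]
    [Algebra F E] [Algebra F R] [Algebra.FiniteType F R] :
    ∃ s : ℕ, ringKrullDim R = s ∧ Algebra.trdeg F R = s ∧
      ∀ Q ∈ minimalPrimes (R ⊗[F] E), ringKrullDim ((R ⊗[F] E) ⧸ Q) = s := by
  obtain ⟨s, g, hg, hi⟩ := exists_integral_inj_algHom_of_fg F R
  let e : MvPolynomial (Fin s) F ⊗[F] E ≃+* MvPolynomial (Fin s) E :=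
    (Algebra.TensorProduct.comm F _ E).toRingEquiv.trans
      (MvPolynomial.algebraTensorAlgEquiv F E).toRingEquiv
  have : IsDomain (MvPolynomial (Fin s) F ⊗[F] E) := e.toMulEquiv.isDomain _
  refine ⟨s, ?_, ?_, ?_⟩
  · rw [← dim_eq_of_integral g.toRingHom hg hi]
    simp [MvPolynomial.ringKrullDim_of_isNoetherianRing]
  · let := g.toRingHom.toAlgebra
    have : IsScalarTower F (MvPolynomial (Fin s) F) R :=
      IsScalarTower.of_algebraMap_eq' g.comp_algebraMap.symm
    have : FaithfulSMul (MvPolynomial (Fin s) F) R :=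
      (faithfulSMul_iff_algebraMap_injective _ _).2 hg
    have : Algebra.IsIntegral (MvPolynomial (Fin s) F) R := ⟨hi⟩
    rw [← _root_.trdeg_add_eq F (MvPolynomial (Fin s) F) (A := R), _root_.trdeg_eq_zero (R := MvPolynomial (Fin s) F),
      MvPolynomial.trdeg_of_isDomain]
    simp
  · intro Q hQ
    let ψ := (Ideal.Quotient.mk Q).comp (Algebra.TensorProduct.map g (AlgHom.id F E)).toRingHom
    rw [← dim_eq_of_integral ψ ?_ ?_, ringKrullDim_eq_of_ringEquiv e]
    · simp [MvPolynomial.ringKrullDim_of_isNoetherianRing]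
    · rw [injective_iff_map_eq_zero]
      intro f hf
      by_contra hf0
      have hmem : Algebra.TensorProduct.map g (AlgHom.id F E) f ∈ Q :=
        Ideal.Quotient.eq_zero_iff_mem.1 hf
      refine notMem_nonZeroDivisors_of_mem_mem_minimalPrimes hmem hQ ?_
      rw [mem_nonZeroDivisors_iff_right]
      intro y hy
      exact map_mul_inj g hg f hf0 y (by rwa [mul_comm])
    · exact RingHom.IsIntegral.trans _ _ (map_integral g hi)
        (RingHom.isIntegral_of_surjective _ Ideal.Quotient.mk_surjective)

theorem dim_local {T : Type u} [TopologicalSpace T] [Nonempty T] (n : WithBot ℕ∞)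
    (h : ∀ x : T, ∃ (W : Type u) (_ : TopologicalSpace W) (f : W → T),
      Topology.IsOpenEmbedding f ∧ x ∈ Set.range f ∧ topologicalKrullDim W = n) :
    topologicalKrullDim T = n := by
  apply le_antisymm
  · rw [topologicalKrullDim, Order.krullDim_eq_iSup_coheight]
    refine iSup_le fun A ↦ ?_
    obtain ⟨x, hx⟩ := A.2.nonempty
    obtain ⟨W, _, f, hf, hxf, rfl⟩ := h x
    have hA : (f ⁻¹' (A : Set T)).Nonempty := by
      obtain ⟨w, rfl⟩ := hxf
      exact ⟨w, hx⟩
    obtain ⟨B, hB⟩ := (TopologicalSpace.IrreducibleCloseds.orderIsoOfIsOpenEmbedding f hf).surjective ⟨A, hA⟩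
    have hB' : TopologicalSpace.IrreducibleCloseds.map f hf.continuous B = A :=
      congrArg Subtype.val hB
    rw [← hB', hf.coheight_map, topologicalKrullDim, Order.krullDim_eq_iSup_coheight]
    exact le_iSup (fun a : TopologicalSpace.IrreducibleCloseds W ↦ (Order.coheight a : WithBot ℕ∞)) B
  · obtain ⟨W, _, f, hf, -, rfl⟩ := h (Classical.arbitrary T)
    exact hf.isInducing.topologicalKrullDim_le

theorem dim_zeroLocus {A : Type*} [CommRing A] (Q : Ideal A) :
    topologicalKrullDim (PrimeSpectrum.zeroLocus (Q : Set A)) = ringKrullDim (A ⧸ Q) := by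
  rw [← PrimeSpectrum.topologicalKrullDim_eq_ringKrullDim]
  have h := PrimeSpectrum.isClosedEmbedding_comap_of_surjective (A ⧸ Q) (Ideal.Quotient.mk Q)
    Ideal.Quotient.mk_surjective
  have hr : Set.range (PrimeSpectrum.comap (Ideal.Quotient.mk Q)) = PrimeSpectrum.zeroLocus (Q : Set A) := by
    rw [_root_.range_comap_of_surjective _ _ Ideal.Quotient.mk_surjective, Ideal.mk_ker]
  rw [← hr]
  exact (IsHomeomorph.topologicalKrullDim_eq _ h.isEmbedding.toHomeomorph.isHomeomorph).symm

theorem dim_irrComp (F E R : Type u) [Field F] [Field E] [CommRing R] [IsDomain R]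
    [Algebra F E] [Algebra F R] [Algebra.FiniteType F R] (n : ℕ) (hn : Algebra.trdeg F R = n) :
    ringKrullDim R = n ∧ ∀ T ∈ irreducibleComponents (PrimeSpectrum (R ⊗[F] E)),
      topologicalKrullDim T = n := by
  obtain ⟨s, h1, h2, h3⟩ := alg_main F E R
  obtain rfl : s = n := by
    rw [hn] at h2; exact_mod_cast h2.symm
  refine ⟨h1, fun T hT ↦ ?_⟩
  have hc := isClosed_of_mem_irreducibleComponents T hT
  obtain ⟨I, rfl⟩ := (PrimeSpectrum.isClosed_iff_zeroLocus_ideal T).1 hc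
  rw [← PrimeSpectrum.zeroLocus_radical, dim_zeroLocus]
  exact h3 _ (PrimeSpectrum.zeroLocus_ideal_mem_irreducibleComponents.1 hT)

theorem exists_trdeg (F : Type u) [Field F] 
    (Y : Scheme.{u}) (q : Y ⟶ Spec (CommRingCat.of F))
    [IsIntegral Y] [LocallyOfFiniteType q] : ∃ n : ℕ, ∀ (U : Y.Opens) (hU : IsAffineOpen U)
      (_ : Nonempty U) (a : CommRingCat.of F ⟶ Γ(Y, U)) (_ : Spec.map a = hU.fromSpec ≫ q),
      a.hom.FiniteType ∧ @Algebra.trdeg F Γ(Y, U) _ _ a.hom.toAlgebra = n := by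
  let b : CommRingCat.of F ⟶ Y.functionField := Spec.preimage (Y.fromSpecStalk (genericPoint Y) ≫ q)
  let : Algebra F Y.functionField := b.hom.toAlgebra
  have key : ∀ (U : Y.Opens) (hU : IsAffineOpen U)
      (_ : Nonempty U) (a : CommRingCat.of F ⟶ Γ(Y, U)) (_ : Spec.map a = hU.fromSpec ≫ q),
      a.hom.FiniteType ∧ @Algebra.trdeg F Γ(Y, U) _ _ a.hom.toAlgebra =
        Algebra.trdeg F Y.functionField := by
    intro U hU hne a ha
    have hft : a.hom.FiniteType := by
      have : LocallyOfFiniteType (Spec.map a) := by rw [ha]; infer_instance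
      exact HasRingHomProperty.Spec_iff.mp this
    refine ⟨hft, ?_⟩
    let : Algebra F Γ(Y, U) := a.hom.toAlgebra
    have hab : a ≫ Y.germToFunctionField U = b := by
      apply Spec.map_injective
      rw [Spec.map_comp, ha, Spec.map_preimage, ← Category.assoc]
      congr 1
      exact hU.fromSpecStalk_eq_fromSpecStalk _
    have : IsScalarTower F Γ(Y, U) Y.functionField := 
      IsScalarTower.of_algebraMap_eq' (by
        change b.hom = _
        rw [← hab]; rfl)
    have := functionField_isFractionRing_of_isAffineOpen Y U hU
    have : FaithfulSMul Γ(Y, U) Y.functionField :=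
      (faithfulSMul_iff_algebraMap_injective _ _).2 (IsFractionRing.injective _ _)
    have : Algebra.IsAlgebraic Γ(Y, U) Y.functionField :=
      IsLocalization.isAlgebraic _ (nonZeroDivisors Γ(Y, U))
    have : Nontrivial Γ(Y, U) := inferInstance
    rw [← _root_.trdeg_add_eq F Γ(Y, U) (A := Y.functionField),
      _root_.trdeg_eq_zero (R := Γ(Y, U)), add_zero]
  obtain ⟨_, ⟨U, hU, rfl⟩, hxU, -⟩ :=
    Y.isBasis_affineOpens.exists_subset_of_mem_open (Set.mem_univ (genericPoint Y)) isOpen_univ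
  obtain ⟨h1, h2⟩ := key U hU ⟨⟨_, hxU⟩⟩ (Spec.preimage (hU.fromSpec ≫ q)) (Spec.map_preimage _)
  have : Nonempty U := ⟨⟨_, hxU⟩⟩
  let : Algebra F Γ(Y, U) := (Spec.preimage (hU.fromSpec ≫ q)).hom.toAlgebra
  have : Algebra.FiniteType F Γ(Y, U) := h1
  obtain ⟨s, -, hs, -⟩ := alg_main F F Γ(Y, U)
  refine ⟨s, fun V hV hne a ha ↦ ⟨(key V hV hne a ha).1, ?_⟩⟩
  rw [(key V hV hne a ha).2, ← h2]
  exact hs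

theorem integral_case (F : Type u) [Field F] (E : Type u) [Field E] [Algebra F E]
    (Y : Scheme.{u}) (q : Y ⟶ Spec (CommRingCat.of F))
    [IsIntegral Y] [LocallyOfFiniteType q]
    (X : Scheme.{u}) (π : X ⟶ Y) (s : X ⟶ Spec (CommRingCat.of E))
    (hpb : IsPullback π s q (Spec.map (CommRingCat.ofHom (algebraMap F E))))
    (T : Set X) (hT : T ∈ irreducibleComponents X) :
    topologicalKrullDim ↥T = topologicalKrullDim Y := by
  obtain ⟨n, hn⟩ := exists_trdeg F Y q
  have hTne : Nonempty T := hT.1.nonempty.to_subtype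
  trans (n : WithBot ℕ∞)
  · refine dim_local _ fun x ↦ ?_
    obtain ⟨_, ⟨U, hU, rfl⟩, hxU, -⟩ :=
      Y.isBasis_affineOpens.exists_subset_of_mem_open (Set.mem_univ (π x.1)) isOpen_univ
    have hne : Nonempty U := ⟨⟨_, hxU⟩⟩
    let a : CommRingCat.of F ⟶ Γ(Y, U) := Spec.preimage (hU.fromSpec ≫ q)
    have ha : Spec.map a = hU.fromSpec ≫ q := Spec.map_preimage _
    obtain ⟨h1, h2⟩ := hn U hU hne a ha
    let : Algebra F Γ(Y, U) := a.hom.toAlgebra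
    have : Algebra.FiniteType F Γ(Y, U) := h1
    have hd := (dim_irrComp F E Γ(Y, U) n h2).2
    have p1 : IsPullback (pullback.snd π hU.fromSpec) (pullback.fst π hU.fromSpec ≫ s)
        (hU.fromSpec ≫ q) (Spec.map (CommRingCat.ofHom (algebraMap F E))) :=
      ((IsPullback.of_hasPullback π hU.fromSpec).paste_horiz hpb.flip).flip
    have p2 := isPullback_SpecMap_of_isPushout _ _ _ _
      (CommRingCat.isPushout_tensorProduct F Γ(Y, U) E)
    have p3 : Spec.map (CommRingCat.ofHom (algebraMap F Γ(Y, U))) = hU.fromSpec ≫ q := ha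
    rw [p3] at p2
    let e := p2.isoIsPullback _ _ p1
    let j := e.hom ≫ pullback.fst π hU.fromSpec
    have hfi : IsOpenImmersion hU.fromSpec := hU.isOpenImmersion_fromSpec
    have hj0 : IsOpenImmersion (pullback.fst π hU.fromSpec) := inferInstance
    have hj : IsOpenImmersion j := IsOpenImmersion.comp e.hom (pullback.fst π hU.fromSpec)
    have hxj : x.1 ∈ Set.range j := by
      have h0 : x.1 ∈ Set.range (pullback.fst π hU.fromSpec) := by
        rw [Scheme.Pullback.range_fst, hU.range_fromSpec]; exact hxU
      obtain ⟨w, hw⟩ := h0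
      refine ⟨e.inv w, ?_⟩
      rw [← Scheme.Hom.comp_apply]
      simp only [j, Iso.inv_hom_id_assoc]
      exact hw
    have hjT := preimage_mem_irreducibleComponents hT j.isOpenEmbedding ⟨x.1, x.2, hxj⟩
    refine ⟨j ⁻¹' T, inferInstance, T.restrictPreimage j, j.isOpenEmbedding.restrictPreimage T, ?_, hd _ hjT⟩
    obtain ⟨w, hw⟩ := hxj
    exact ⟨⟨w, by rw [Set.mem_preimage, hw]; exact x.2⟩, Subtype.ext hw⟩
  · refine (dim_local _ fun y ↦ ?_).symm
    obtain ⟨_, ⟨U, hU, rfl⟩, hxU, -⟩ :=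
      Y.isBasis_affineOpens.exists_subset_of_mem_open (Set.mem_univ y) isOpen_univ
    have hne : Nonempty U := ⟨⟨_, hxU⟩⟩
    let a : CommRingCat.of F ⟶ Γ(Y, U) := Spec.preimage (hU.fromSpec ≫ q)
    obtain ⟨h1, h2⟩ := hn U hU hne a (Spec.map_preimage _)
    let : Algebra F Γ(Y, U) := a.hom.toAlgebra
    have : Algebra.FiniteType F Γ(Y, U) := h1
    have hd := (dim_irrComp F E Γ(Y, U) n h2).1
    refine ⟨Spec Γ(Y, U), inferInstance, hU.fromSpec, hU.isOpenImmersion_fromSpec.base_open, ?_, ?_⟩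
    · rw [hU.range_fromSpec]; exact hxU
    · rw [← hd]; exact PrimeSpectrum.topologicalKrullDim_eq_ringKrullDim _

theorem reduced_vanishing (Y : Scheme.{u}) (Z : Closeds Y) :
    IsReduced (Scheme.IdealSheafData.vanishingIdeal Z).subscheme := by
  let I := Scheme.IdealSheafData.vanishingIdeal Z
  have : ∀ i, IsReduced (I.subschemeCover.openCover.X i) := by
    intro U
    change IsReduced (Spec (CommRingCat.of (Γ(Y, U.1) ⧸ I.ideal U)))
    have : _root_.IsReduced (Γ(Y, U.1) ⧸ I.ideal U) := by
      rw [← Ideal.isRadical_iff_quotient_reduced]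
      exact PrimeSpectrum.isRadical_vanishingIdeal _
    infer_instance
  exact IsReduced.of_openCover _ I.subschemeCover.openCover

theorem final (F : Type u) [Field F] (E : Type u) [Field E] [Algebra F E]
    (Y : Scheme.{u}) (q : Y ⟶ Spec (CommRingCat.of F))
    [LocallyOfFiniteType q] 
    (X : Scheme.{u}) (π : X ⟶ Y) (s : X ⟶ Spec (CommRingCat.of E))
    (hpb : IsPullback π s q (Spec.map (CommRingCat.ofHom (algebraMap F E))))
    (Z : Set Y) (hZc : IsClosed Z) (hZirr : IsIrreducible Z)
    (T : Set X)
    (hT : Maximal (fun t : Set X => t ⊆ π.base ⁻¹' Z ∧ IsIrreducible t) T) :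
    topologicalKrullDim ↥T = topologicalKrullDim ↥Z := by
  let I := Scheme.IdealSheafData.vanishingIdeal ⟨Z, hZc⟩
  let ι := I.subschemeι
  have hr : Set.range ι = Z := I.range_subschemeι
  have hred : IsReduced I.subscheme := reduced_vanishing Y ⟨Z, hZc⟩
  let eZ : I.subscheme ≃ₜ Z := ι.isEmbedding.toHomeomorph.trans (Homeomorph.setCongr hr)
  have hirr : IrreducibleSpace I.subscheme := by
    have := isIrreducible_iff_irreducibleSpace.1 hZirr
    exact Function.Surjective.irreducibleSpace eZ.symm.continuous eZ.symm.surjective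
  have hint : IsIntegral I.subscheme := isIntegral_of_irreducibleSpace_of_isReduced _
  have p1 : IsPullback (pullback.snd π ι) (pullback.fst π ι ≫ s)
        (ι ≫ q) (Spec.map (CommRingCat.ofHom (algebraMap F E))) :=
      ((IsPullback.of_hasPullback π ι).paste_horiz hpb.flip).flip
  let k := pullback.fst π ι
  have hk : Topology.IsClosedEmbedding k := k.isClosedEmbedding
  have hkr : Set.range k = π ⁻¹' Z := by
    rw [Scheme.Pullback.range_fst, hr]
  have hTr : T ⊆ Set.range k := hkr ▸ hT.1.1
  have himg : k '' (k ⁻¹' T) = T := Set.image_preimage_eq_of_subset hTr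
  have e2 : (k ⁻¹' T) ≃ₜ T :=
    (hk.isEmbedding.homeomorphImage (k ⁻¹' T)).trans (Homeomorph.setCongr himg)
  have hT' : k ⁻¹' T ∈ irreducibleComponents (pullback π ι : Scheme) := by
    refine ⟨?_, ?_⟩
    · have := isIrreducible_iff_irreducibleSpace.1 hT.1.2
      exact isIrreducible_iff_irreducibleSpace.2
        (Function.Surjective.irreducibleSpace e2.symm.continuous e2.symm.surjective)
    · intro t ht hle
      have h := hT.2 (y := k '' t) ⟨hkr ▸ Set.image_subset_range _ _, ht.image _ k.continuous.continuousOn⟩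
        (by rw [← himg]; exact Set.image_mono hle)
      exact Set.image_subset_iff.1 h
  have hmain := integral_case F E I.subscheme (ι ≫ q) _ _ _ p1 _ hT'
  rw [← IsHomeomorph.topologicalKrullDim_eq _ eZ.isHomeomorph, ← hmain]
  exact (IsHomeomorph.topologicalKrullDim_eq _ e2.isHomeomorph).symm

end Helpers

/-- Lemma 5.3 of the paper. For the base extension
`X = Y ×_{Spec F} Spec E` of an integral scheme `Y` of finite type over a field `F`, with
projection `π : X → Y`, every irreducible component of the preimage of an irreducible closed
subset `Z ⊆ Y` has the same (topological Krull) dimension as `Z`. -/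
theorem statement4 (F : Type u) [Field F] (E : Type u) [Field E] [Algebra F E]
    (Y : Scheme.{u}) (q : Y ⟶ Spec (CommRingCat.of F))
    [IsIntegral Y] [LocallyOfFiniteType q] [QuasiCompact q]
    (X : Scheme.{u}) (π : X ⟶ Y) (s : X ⟶ Spec (CommRingCat.of E))
    (hpb : IsPullback π s q (Spec.map (CommRingCat.ofHom (algebraMap F E))))
    (Z : Set Y) (hZc : IsClosed Z) (hZirr : IsIrreducible Z)
    (T : Set X)
    (hT : Maximal (fun t : Set X => t ⊆ π.base ⁻¹' Z ∧ IsIrreducible t) T) :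
    topologicalKrullDim ↥T = topologicalKrullDim ↥Z := by
  exact final F E Y q X π s hpb Z hZc hZirr T hT

end ThcrDM
end

section
/- Let k ⊆ ℓ be algebraically closed uncountable fields, let Y be an integral scheme of finite type over k with a k-automorphism σ: Y → Y, let X = Y ×_{Spec k} Spec ℓ, and let σ_X = σ ×_k id_ℓ be the induced ℓ-automorphism of X. Then (X, σ_X) has good dense orbits if and only if (Y, σ) has good dense orbits. -/
open AlgebraicGeometry CategoryTheory CategoryTheory.Limits TopologicalSpace

open scoped TensorProduct

universe u

namespace ThcrDM

variable {X : Scheme.{u}}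

theorem alg1 (k : Type u) [Field k] [IsAlgClosed k] (L : Type u) [Field L] [Algebra k L]
    (S : Set L) (hS : S.Finite) : ∃ (R : Subalgebra k L) (t : R →ₐ[k] k), S ⊆ R ∧
      ∀ r : R, (r : L) ∈ S → (r : L) ≠ 0 → t r ≠ 0 := by
  let R := Algebra.adjoin k (S ∪ (fun x => x⁻¹) '' S)
  have hft : Algebra.FiniteType k R :=
    (Subalgebra.fg_iff_finiteType _).1 (Subalgebra.fg_def.2 ⟨_, hS.union (hS.image _), rfl⟩)
  obtain ⟨m, hm⟩ := Ideal.exists_maximal R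
  let : Field (R ⧸ m) := Ideal.Quotient.field m
  have : Algebra.FiniteType k (R ⧸ m) :=
    Algebra.FiniteType.of_surjective (Ideal.Quotient.mkₐ k m) (Ideal.Quotient.mkₐ_surjective k m)
  have : Module.Finite k (R ⧸ m) := finite_of_finite_type_of_isJacobsonRing k (R ⧸ m)
  have hb := IsAlgClosed.algebraMap_bijective_of_isIntegral (k := k) (K := R ⧸ m)
  let e : k ≃ₐ[k] (R ⧸ m) := AlgEquiv.ofBijective (Algebra.ofId k (R ⧸ m)) hb
  refine ⟨R, e.symm.toAlgHom.comp (Ideal.Quotient.mkₐ k m),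
    fun s hs => Algebra.subset_adjoin (Or.inl hs), ?_⟩
  intro r hr h0
  have hu : IsUnit r := by
    refine IsUnit.of_mul_eq_one ⟨(r : L)⁻¹, Algebra.subset_adjoin (Or.inr ⟨_, hr, rfl⟩)⟩ ?_
    ext
    simp [h0]
  exact (hu.map _).ne_zero

theorem alg2 (k : Type u) [Field k] [IsAlgClosed k] (L : Type u) [Field L] [Algebra k L]
    (S : Set L) (hS : S.Finite) : ∃ (O : Type u) (_ : CommRing O) (_ : Algebra k O)
      (_ : IsLocalRing O) (ι : O →ₐ[k] L) (t : O →ₐ[k] k), Function.Injective ι ∧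
      IsLocalHom t.toRingHom ∧ 
      ∀ s ∈ S, ∃ a, ι a = s ∧ (s ≠ 0 → t a ≠ 0) := by
  obtain ⟨R, t, hSR, ht⟩ := alg1 k L S hS
  let m : Ideal R := RingHom.ker t
  have hm : m.IsPrime := RingHom.ker_isPrime _
  let O := Localization.AtPrime m
  let t' : O →ₐ[k] k := IsLocalization.liftAlgHom (M := m.primeCompl) (f := t) (fun y => by
    have : t y ≠ 0 := y.2
    exact this.isUnit)
  let ι : O →ₐ[k] L := IsLocalization.liftAlgHom (M := m.primeCompl) (f := R.val) (fun y => by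
    have : t y ≠ 0 := y.2
    refine IsUnit.mk0 _ ?_
    intro h
    apply this
    have : (y : R) = 0 := Subtype.ext h
    rw [this, map_zero])
  have htr : ∀ r : R, t' (algebraMap R O r) = t r := fun r => by simp [t']
  have hir : ∀ r : R, ι (algebraMap R O r) = r := fun r => by simp [ι]
  refine ⟨O, inferInstance, inferInstance, inferInstance, ι, t', ?_, ?_, ?_⟩
  · rw [injective_iff_map_eq_zero]
    intro a ha
    obtain ⟨x, y, rfl⟩ := IsLocalization.exists_mk'_eq m.primeCompl a
    have h1 := congrArg ι (IsLocalization.mk'_spec O x y)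
    rw [map_mul, ha, zero_mul, hir] at h1
    have : x = 0 := Subtype.ext h1.symm
    rw [this, IsLocalization.mk'_zero]
  · refine ⟨fun a ha => ?_⟩
    obtain ⟨x, y, rfl⟩ := IsLocalization.exists_mk'_eq m.primeCompl a
    have h1 := congrArg t' (IsLocalization.mk'_spec O x y)
    rw [map_mul, htr, htr] at h1
    have hx : x ∈ m.primeCompl := by
      change t x ≠ 0
      rw [← h1]
      exact mul_ne_zero ha.ne_zero y.2
    exact (IsLocalization.AtPrime.isUnit_mk'_iff O m x y).2 hx
  · intro s hs
    refine ⟨algebraMap R O ⟨s, hSR hs⟩, hir _, fun h => ?_⟩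
    rw [htr]
    exact ht _ hs h


theorem alg0 (k : Type u) [Field k] (L : Type u) [Field L] [Algebra k L]
    (A : Type u) [CommRing A] [Algebra k A] (f : L ⊗[k] A) (hf : f ≠ 0) :
    ∃ (T : Type u) (I : Finset T) (c : T → L) (b : T → A), LinearIndependent k b ∧
      f = ∑ i ∈ I, c i ⊗ₜ[k] b i ∧ ∃ i ∈ I, c i ≠ 0 := by
  let b := Module.Basis.ofVectorSpace k A
  let B := Algebra.TensorProduct.basis L b
  refine ⟨_, (B.repr f).support, B.repr f, b, b.linearIndependent, ?_, ?_⟩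
  · conv_lhs => rw [← B.linearCombination_repr f]
    rw [Finsupp.linearCombination_apply, Finsupp.sum]
    refine Finset.sum_congr rfl fun i _ => ?_
    rw [Algebra.TensorProduct.basis_apply, TensorProduct.smul_tmul', smul_eq_mul, mul_one]
  · have h : B.repr f ≠ 0 := fun h => hf (B.repr.map_eq_zero_iff.1 h)
    obtain ⟨i, hi⟩ := Finsupp.support_nonempty_iff.2 h
    exact ⟨i, hi, Finsupp.mem_support_iff.1 hi⟩

theorem li_ne {k : Type u} [Field k] {A : Type u} [CommRing A] [Algebra k A] {T : Type u}
    {I : Finset T} {b : T → A} (hb : LinearIndependent k b) (d : T → k) {i : T} (hi : i ∈ I)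
    (hd : d i ≠ 0) : ∑ i ∈ I, d i • b i ≠ 0 := fun h =>
  hd (linearIndependent_iff'.1 hb I d h i hi)

theorem alg3 (k : Type u) [Field k] [IsAlgClosed k] (L : Type u) [Field L] [Algebra k L]
    (A : Type u) [CommRing A] [IsDomain A] [Algebra k A] : IsDomain (L ⊗[k] A) := by
  have : NoZeroDivisors (L ⊗[k] A) := by
    refine ⟨fun {f g} hfg => ?_⟩
    by_contra! hne
    obtain ⟨T₁, I₁, c₁, b₁, hb₁, hf, i₁, hi₁, hc₁⟩ := alg0 k L A f hne.1
    obtain ⟨T₂, I₂, c₂, b₂, hb₂, hg, i₂, hi₂, hc₂⟩ := alg0 k L A g hne.2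
    obtain ⟨R, t, hSR, ht⟩ := alg1 k L (c₁ '' I₁ ∪ c₂ '' I₂)
      ((I₁.finite_toSet.image _).union (I₂.finite_toSet.image _))
    let T : R ⊗[k] A →ₐ[k] A := Algebra.TensorProduct.lift
      ((Algebra.ofId k A).comp t) (AlgHom.id k A) (fun _ _ => Commute.all _ _)
    let J : R ⊗[k] A →ₐ[k] L ⊗[k] A := Algebra.TensorProduct.map R.val (AlgHom.id k A)
    have hJ : Function.Injective J :=
      Module.Flat.rTensor_preserves_injective_linearMap (M := A) R.val.toLinearMap
        Subtype.val_injective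
    have lift : ∀ (T₀ : Type u) (I : Finset T₀) (c : T₀ → L) (b : T₀ → A)
        (_ : LinearIndependent k b) (i : T₀) (_ : i ∈ I) (_ : c i ≠ 0),
        c '' I ⊆ (c₁ '' I₁ ∪ c₂ '' I₂) →
        ∃ f', J f' = ∑ i ∈ I, c i ⊗ₜ[k] b i ∧ T f' ≠ 0 := by
      intro T₀ I c b hb i hi hc hS
      have hm : ∀ i ∈ I, c i ∈ R := fun i hi => hSR (hS ⟨i, hi, rfl⟩)
      classical
      let c' : T₀ → R := fun i => if h : i ∈ I then ⟨c i, hm i h⟩ else 0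
      have hc' : ∀ i ∈ I, (c' i : L) = c i := fun i hi => by simp [c', hi]
      refine ⟨∑ i ∈ I, c' i ⊗ₜ b i, ?_, ?_⟩
      · rw [map_sum]
        refine Finset.sum_congr rfl fun i hi => ?_
        simp [J, hc' i hi]
      · have : T (∑ i ∈ I, c' i ⊗ₜ b i) = ∑ i ∈ I, t (c' i) • b i := by
          rw [map_sum]
          refine Finset.sum_congr rfl fun i hi => ?_
          simp [T, Algebra.smul_def, Algebra.ofId_apply, Algebra.TensorProduct.lift_tmul]
        rw [this]
        refine li_ne hb _ hi (ht _ ?_ ?_)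
        · rw [hc' i hi]; exact hS ⟨i, hi, rfl⟩
        · rwa [hc' i hi]
    obtain ⟨f', hf', hf0⟩ := lift T₁ I₁ c₁ b₁ hb₁ i₁ hi₁ hc₁ Set.subset_union_left
    obtain ⟨g', hg', hg0⟩ := lift T₂ I₂ c₂ b₂ hb₂ i₂ hi₂ hc₂ Set.subset_union_right
    have : f' * g' = 0 := hJ (by rw [map_mul, hf', hg', ← hf, ← hg, hfg, map_zero])
    refine mul_ne_zero hf0 hg0 ?_
    rw [← map_mul, this, map_zero]
  have : Nontrivial (L ⊗[k] A) := inferInstance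
  exact NoZeroDivisors.to_isDomain _

theorem factor {k : Type u} [Field k] {Y : Scheme.{u}} (q : Y ⟶ Spec (CommRingCat.of k))
    {A : Type u} [CommRing A] [Algebra k A] (j : Spec (CommRingCat.of A) ⟶ Y) [IsOpenImmersion j]
    (hj : j ≫ q = Spec.map (CommRingCat.ofHom (algebraMap k A)))
    {B : Type u} [CommRing B] [Algebra k B] (m : Spec (CommRingCat.of B) ⟶ Y)
    (hm : m ≫ q = Spec.map (CommRingCat.ofHom (algebraMap k B)))
    (hr : Set.range m ⊆ Set.range j) :
    ∃ ψ : A →ₐ[k] B, Spec.map (CommRingCat.ofHom ψ.toRingHom) ≫ j = m := by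
  let l := IsOpenImmersion.lift j m hr
  have hl : l ≫ j = m := IsOpenImmersion.lift_fac j m hr
  obtain ⟨φ, hφ⟩ := Spec.map_surjective l
  have : CommRingCat.ofHom (algebraMap k A) ≫ φ = CommRingCat.ofHom (algebraMap k B) := by
    apply Spec.map_injective
    rw [Spec.map_comp, hφ, ← hj, ← hm, ← hl, Category.assoc]
  refine ⟨{ φ.hom with commutes' := fun r => ?_ }, ?_⟩
  · exact congr($(this).hom r)
  · rw [← hl, ← hφ]
    rfl

theorem chart {k : Type u} [Field k] {Y : Scheme.{u}} (q : Y ⟶ Spec (CommRingCat.of k))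
    [IsIntegral Y] [LocallyOfFiniteType q] (y : Y) (U : Set Y) (hU : IsOpen U) (hy : y ∈ U) :
    ∃ (A : Type u) (_ : CommRing A) (_ : Algebra k A) (j : Spec (CommRingCat.of A) ⟶ Y),
      IsOpenImmersion j ∧ j ≫ q = Spec.map (CommRingCat.ofHom (algebraMap k A)) ∧
      IsDomain A ∧ Algebra.FiniteType k A ∧ y ∈ Set.range j ∧ Set.range j ⊆ U := by
  obtain ⟨V, hV, hyV, hVU⟩ := Opens.isBasis_iff_nbhd.1 Y.isBasis_affineOpens (U := ⟨U, hU⟩) hy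
  have hV' : IsAffineOpen V := hV
  obtain ⟨φ, hφ⟩ := Spec.map_surjective (hV'.fromSpec ≫ q)
  have : Nonempty V := ⟨⟨y, hyV⟩⟩
  let : Algebra k Γ(Y, V) := φ.hom.toAlgebra
  refine ⟨Γ(Y, V), inferInstance, inferInstance, hV'.fromSpec, inferInstance, hφ.symm,
    inferInstance, ?_, ?_, ?_⟩
  · have h : LocallyOfFiniteType (Spec.map φ) := by rw [hφ]; infer_instance
    exact (HasRingHomProperty.Spec_iff (P := @LocallyOfFiniteType)).1 h
  · rw [hV'.range_fromSpec]; exact hyV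
  · rw [hV'.range_fromSpec]; exact hVU

/-- the chart of the base change -/
theorem chartX {k : Type u} [Field k]
    {ℓ : Type u} [Field ℓ] [Algebra k ℓ]
    {Y : Scheme.{u}} {q : Y ⟶ Spec (CommRingCat.of k)}
    {X : Scheme.{u}} {π : X ⟶ Y} {s : X ⟶ Spec (CommRingCat.of ℓ)}
    (hpb : IsPullback π s q (Spec.map (CommRingCat.ofHom (algebraMap k ℓ))))
    {A : Type u} [CommRing A] [Algebra k A] (j : Spec (CommRingCat.of A) ⟶ Y) [IsOpenImmersion j]
    (hj : j ≫ q = Spec.map (CommRingCat.ofHom (algebraMap k A))) :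
    ∃ c : Spec (CommRingCat.of (ℓ ⊗[k] A)) ⟶ X,
      (∀ (L : Type u) [Field L] [Algebra k L] (α : ℓ →ₐ[k] L) (ψ : A →ₐ[k] L)
        (x : Spec (CommRingCat.of L) ⟶ X), x ≫ s = Spec.map (CommRingCat.ofHom α.toRingHom) →
        x ≫ π = Spec.map (CommRingCat.ofHom ψ.toRingHom) ≫ j →
        x = Spec.map (CommRingCat.ofHom
          (Algebra.TensorProduct.lift α ψ (fun _ _ => Commute.all _ _)).toRingHom) ≫ c) ∧
      ∀ x : X, π x ∈ Set.range j → x ∈ Set.range c := by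
  let c : Spec (CommRingCat.of (ℓ ⊗[k] A)) ⟶ X := hpb.lift
    (Spec.map (CommRingCat.ofHom
      (Algebra.TensorProduct.includeRight : A →ₐ[k] ℓ ⊗[k] A).toRingHom) ≫ j)
    (Spec.map (CommRingCat.ofHom
      (Algebra.TensorProduct.includeLeft : ℓ →ₐ[k] ℓ ⊗[k] A).toRingHom)) (by
        rw [Category.assoc, hj, ← Spec.map_comp, ← Spec.map_comp, ← CommRingCat.ofHom_comp,
          ← CommRingCat.ofHom_comp]
        congr 2
        exact (AlgHom.comp_algebraMap
          (Algebra.TensorProduct.includeRight : A →ₐ[k] ℓ ⊗[k] A)).trans (AlgHom.comp_algebraMap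
          (Algebra.TensorProduct.includeLeft : ℓ →ₐ[k] ℓ ⊗[k] A)).symm)
  have H : (∀ (L : Type u) [Field L] [Algebra k L] (α : ℓ →ₐ[k] L) (ψ : A →ₐ[k] L)
        (x : Spec (CommRingCat.of L) ⟶ X), x ≫ s = Spec.map (CommRingCat.ofHom α.toRingHom) →
        x ≫ π = Spec.map (CommRingCat.ofHom ψ.toRingHom) ≫ j →
        x = Spec.map (CommRingCat.ofHom
          (Algebra.TensorProduct.lift α ψ (fun _ _ => Commute.all _ _)).toRingHom) ≫ c) := by
    intro L _ _ α ψ x h1 h2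
    apply hpb.hom_ext
    · rw [h2, Category.assoc, hpb.lift_fst, ← Category.assoc, ← Spec.map_comp,
        ← CommRingCat.ofHom_comp]
      congr 3
      ext a
      simp [Algebra.TensorProduct.lift_tmul]
    · rw [h1, Category.assoc, hpb.lift_snd, ← Spec.map_comp, ← CommRingCat.ofHom_comp]
      congr 2
      ext a
      simp [Algebra.TensorProduct.lift_tmul]
  refine ⟨c, H, ?_⟩
  intro x hx
  let L : Type u := X.residueField x
  let : Field L := inferInstanceAs (Field (X.residueField x))
  let ξ : Spec (CommRingCat.of L) ⟶ X := X.fromSpecResidueField x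
  obtain ⟨α, hα⟩ := Spec.map_surjective (ξ ≫ s)
  let : Algebra k L := (α.hom.comp (algebraMap k ℓ)).toAlgebra
  let α' : ℓ →ₐ[k] L := { α.hom with commutes' := fun r => rfl }
  have hq : (ξ ≫ π) ≫ q = Spec.map (CommRingCat.ofHom (algebraMap k L)) := by
    rw [Category.assoc, hpb.w, ← Category.assoc, ← hα, ← Spec.map_comp]
    rfl
  obtain ⟨ψ, hψ⟩ := factor q j hj (ξ ≫ π) hq (by
    rintro _ ⟨z, rfl⟩
    have : ξ z = x := X.fromSpecResidueField_apply x z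
    rw [Scheme.Hom.comp_apply, this]
    exact hx)
  have := H L α' ψ ξ hα.symm hψ.symm
  let z : Spec (CommRingCat.of L) := Classical.arbitrary (PrimeSpectrum L)
  have hz : ξ z = x := X.fromSpecResidueField_apply x z
  rw [this, Scheme.Hom.comp_apply] at hz
  exact ⟨_, hz⟩

theorem iter_hom {X Y : Scheme.{u}} {Z W : Scheme.{u}} (σ : Y ≅ Y) (q : Y ⟶ Z) (hσ : σ.hom ≫ q = q)
    (π : X ⟶ Y) (s : X ⟶ W) (σX : X ≅ X) (h₁ : σX.hom ≫ π = π ≫ σ.hom) (h₂ : σX.hom ≫ s = s)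
    (n : ℤ) : ∃ (τ : Y ⟶ Y) (τX : X ⟶ X), τ ≫ q = q ∧ τX ≫ π = π ≫ τ ∧ τX ≫ s = s ∧
      (∀ y, iter σ n y = τ y) ∧ (∀ x, iter σX n x = τX x) := by
  have key : ∀ (σ : Y ⟶ Y) (σX : X ⟶ X), σ ≫ q = q → σX ≫ π = π ≫ σ → σX ≫ s = s → ∀ n : ℕ,
      ∃ (τ : Y ⟶ Y) (τX : X ⟶ X), τ ≫ q = q ∧ τX ≫ π = π ≫ τ ∧ τX ≫ s = s ∧
      (∀ y, (fun y => σ.base y)^[n] y = τ y) ∧ (∀ x, (fun x => σX.base x)^[n] x = τX x) := by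
    intro σ σX hσ h₁ h₂ n
    induction n with
    | zero => exact ⟨𝟙 _, 𝟙 _, by simp, by simp, by simp, by simp, by simp⟩
    | succ n ih =>
      obtain ⟨τ, τX, a, b, c, d, e⟩ := ih
      refine ⟨σ ≫ τ, σX ≫ τX, by rw [Category.assoc, a, hσ], ?_, by rw [Category.assoc, c, h₂],
        ?_, ?_⟩
      · rw [Category.assoc, b, ← Category.assoc, h₁, Category.assoc]
      · intro y
        rw [Function.iterate_succ_apply, d, Scheme.Hom.comp_apply]
      · intro x
        rw [Function.iterate_succ_apply, e, Scheme.Hom.comp_apply]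
  cases n with
  | ofNat n => exact key σ.hom σX.hom hσ h₁ h₂ n
  | negSucc n =>
    exact key σ.inv σX.inv (by rw [Iso.inv_comp_eq, hσ])
      (by rw [Iso.inv_comp_eq, ← Category.assoc, h₁, Category.assoc, Iso.hom_inv_id,
        Category.comp_id]) (by rw [Iso.inv_comp_eq, h₂]) (n + 1)

noncomputable def perm {X : Scheme.{u}} (σ : X ≅ X) : Equiv.Perm X where
  toFun x := σ.hom x
  invFun x := σ.inv x
  left_inv x := by simp
  right_inv x := by simp

theorem iter_eq {X : Scheme.{u}} (σ : X ≅ X) (n : ℤ) (x : X) : iter σ n x = (perm σ ^ n) x := by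
  cases n with
  | ofNat n =>
    change _ = (perm σ ^ (n : ℤ)) x
    rw [zpow_natCast, Equiv.Perm.coe_pow]
    rfl
  | negSucc n =>
    rw [zpow_negSucc, ← inv_pow, Equiv.Perm.coe_pow]
    rfl

theorem iter_add {X : Scheme.{u}} (σ : X ≅ X) (m n : ℤ) (x : X) :
    iter σ m (iter σ n x) = iter σ (m + n) x := by
  rw [iter_eq, iter_eq, iter_eq, zpow_add, Equiv.Perm.mul_apply]

theorem orbit_iter {X : Scheme.{u}} (σ : X ≅ X) (m : ℤ) (x : X) :
    orbit σ (iter σ m x) = orbit σ x := by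
  ext y
  constructor
  · rintro ⟨n, rfl⟩
    exact ⟨n + m, (iter_add σ n m x).symm⟩
  · rintro ⟨n, rfl⟩
    exact ⟨n - m, by simp only [iter_add, sub_add_cancel]⟩

theorem mem_basicOpen_of_map {A K : Type u} [CommRing A] [Field K] (φ : A →+* K) (f : A)
    (z : Spec (CommRingCat.of K)) :
    (Spec.map (CommRingCat.ofHom φ)) z ∈ (PrimeSpectrum.basicOpen f : Set (PrimeSpectrum A)) ↔
      φ f ≠ 0 := by
  obtain rfl : z = (⊥ : PrimeSpectrum K) := Subsingleton.elim (α := PrimeSpectrum K) _ _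
  change ¬ (f ∈ Ideal.comap φ ⊥) ↔ _
  simp

theorem key7 (k : Type u) [Field k] [IsAlgClosed k]
    (ℓ : Type u) [Field ℓ] [Algebra k ℓ]
    (Y : Scheme.{u}) (q : Y ⟶ Spec (CommRingCat.of k))
    [IsIntegral Y] [LocallyOfFiniteType q]
    (σ : Y ≅ Y) (hσ : σ.hom ≫ q = q)
    (X : Scheme.{u}) (π : X ⟶ Y) (s : X ⟶ Spec (CommRingCat.of ℓ))
    (hpb : IsPullback π s q (Spec.map (CommRingCat.ofHom (algebraMap k ℓ))))
    (σX : X ≅ X) (hσX₁ : σX.hom ≫ π = π ≫ σ.hom) (hσX₂ : σX.hom ≫ s = s)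
    (hD : IsOpen { y : Y | Dense (orbit σ y) }) (w : X) (hw : Dense (orbit σ (π w))) :
    Dense (orbit σX w) := by
  rw [dense_iff_inter_open]
  rintro V₀ hV₀ ⟨v, hv⟩
  obtain ⟨A, _, _, j, _, hj, _, _, hwj, hjD⟩ := chart q (π w) _ hD hw
  obtain ⟨A', _, _, j', _, hj', _, _, hvj, -⟩ := chart q (π v) _ isOpen_univ trivial
  obtain ⟨c, hc, hcr⟩ := chartX hpb j' hj'
  obtain ⟨v', hv'⟩ := hcr v hvj
  have hcV : IsOpen (c ⁻¹' V₀) := hV₀.preimage c.continuous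
  obtain ⟨_, ⟨f, rfl⟩, hf1, hf2⟩ := PrimeSpectrum.isTopologicalBasis_basic_opens.exists_subset_of_mem_open
    (show v' ∈ c ⁻¹' V₀ by rw [Set.mem_preimage, hv']; exact hv) hcV
  have hf0 : f ≠ 0 := by
    rintro rfl
    exact hf1 (Ideal.zero_mem _)
  obtain ⟨T, I, co, b, hb, hfs, i₀, hi₀, hci₀⟩ := alg0 k ℓ A' f hf0
  -- the residue field
  let L : Type u := X.residueField w
  let : Field L := inferInstanceAs (Field (X.residueField w))
  let ξ : Spec (CommRingCat.of L) ⟶ X := X.fromSpecResidueField w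
  have hξ : ∀ z, ξ z = w := fun z => X.fromSpecResidueField_apply w z
  obtain ⟨α, hα⟩ := Spec.map_surjective (ξ ≫ s)
  let : Algebra k L := (α.hom.comp (algebraMap k ℓ)).toAlgebra
  let α' : ℓ →ₐ[k] L := { α.hom with commutes' := fun r => rfl }
  have hq : (ξ ≫ π) ≫ q = Spec.map (CommRingCat.ofHom (algebraMap k L)) := by
    rw [Category.assoc, hpb.w, ← Category.assoc, ← hα, ← Spec.map_comp]
    rfl
  obtain ⟨φ, hφ⟩ := factor q j hj (ξ ≫ π) hq (by
    rintro _ ⟨z, rfl⟩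
    rw [Scheme.Hom.comp_apply, hξ]
    exact hwj)
  obtain ⟨G, hG⟩ := (inferInstance : Algebra.FiniteType k A).out
  obtain ⟨O, _, _, _, ι, t, hι, ht, hO⟩ := alg2 k L (φ '' G ∪ (fun i => α' (co i)) '' I)
    ((G.finite_toSet.image _).union (I.finite_toSet.image _))
  -- lift φ to O
  have hφr : φ.range ≤ ι.range := by
    rw [← Algebra.map_top, ← hG, AlgHom.map_adjoin, Algebra.adjoin_le_iff]
    intro x hx
    obtain ⟨a, ha, -⟩ := hO x (Or.inl hx)
    exact ⟨a, ha⟩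
  obtain ⟨φO, hφO⟩ : ∃ φO : A →ₐ[k] O, ι.comp φO = φ := by
    let e := AlgEquiv.ofInjective ι hι
    refine ⟨e.symm.toAlgHom.comp ((Subalgebra.inclusion hφr).comp φ.rangeRestrict), ?_⟩
    ext a
    have := congrArg Subtype.val (e.apply_symm_apply (Subalgebra.inclusion hφr (φ.rangeRestrict a)))
    exact this
  have hcoef : ∀ i : T, ∃ a : O, i ∈ I → ι a = α' (co i) ∧ (α' (co i) ≠ 0 → t a ≠ 0) := by
    intro i
    by_cases hi : i ∈ I
    · obtain ⟨a, ha⟩ := hO _ (Or.inr ⟨i, hi, rfl⟩)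
      exact ⟨a, fun _ => ha⟩
    · exact ⟨0, fun h => absurd h hi⟩
  choose co' hco' using hcoef
  let ft : A' := ∑ i ∈ I, t (co' i) • b i
  have hft : ft ≠ 0 := li_ne hb _ hi₀ ((hco' i₀ hi₀).2 (by
    rw [Ne, map_eq_zero_iff α' α'.toRingHom.injective]; exact hci₀))
  -- the family of points
  let g : Spec (CommRingCat.of O) ⟶ Y := Spec.map (CommRingCat.ofHom φO.toRingHom) ≫ j
  have hgξ : Spec.map (CommRingCat.ofHom ι.toRingHom) ≫ g = ξ ≫ π := by
    rw [← hφ, ← hφO, ← Category.assoc, ← Spec.map_comp]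
    rfl
  have hgq : g ≫ q = Spec.map (CommRingCat.ofHom (algebraMap k O)) := by
    rw [Category.assoc, hj, ← Spec.map_comp, ← CommRingCat.ofHom_comp]
    congr 2
    exact AlgHom.comp_algebraMap φO
  let z : Spec (CommRingCat.of k) := Classical.arbitrary (PrimeSpectrum k)
  let cp : Spec (CommRingCat.of O) := Spec.map (CommRingCat.ofHom t.toRingHom) z
  have hcp : cp = IsLocalRing.closedPoint O := by
    have hz : (z : PrimeSpectrum k) = IsLocalRing.closedPoint k := Subsingleton.elim _ _
    change PrimeSpectrum.comap t.toRingHom z = _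
    rw [hz]
    exact IsLocalRing.comap_closedPoint t.toRingHom
  let y : Y := g cp
  have hy : Dense (orbit σ y) := hjD ⟨_, rfl⟩
  let N : Set Y := j' '' (PrimeSpectrum.basicOpen ft : Set (PrimeSpectrum A'))
  have hN : IsOpen N := j'.isOpenEmbedding.isOpenMap _ (PrimeSpectrum.basicOpen ft).2
  have hNn : N.Nonempty := by
    refine ⟨j' (⊥ : PrimeSpectrum A'), ⟨_, ?_, rfl⟩⟩
    intro h
    exact hft h
  obtain ⟨_, hyN, n, rfl⟩ := dense_iff_inter_open.1 hy N hN hNn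
  obtain ⟨τ, τX, hτq, hτπ, hτs, hτ, hτX⟩ := iter_hom σ q hσ π s σX hσX₁ hσX₂ n
  replace hyN : τ y ∈ N := hτ y ▸ hyN
  have hgr : Set.range (g ≫ τ) ⊆ Set.range j' := by
    have hm : (g ≫ τ) (IsLocalRing.closedPoint O) ∈ j'.opensRange := by
      rw [← hcp, Scheme.Hom.comp_apply]
      obtain ⟨a, -, ha⟩ := hyN
      exact ⟨a, ha⟩
    have := Scheme.preimage_eq_top_of_closedPoint_mem (R := CommRingCat.of O) (f := g ≫ τ) hm
    rintro _ ⟨p, rfl⟩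
    have hp : p ∈ (g ≫ τ) ⁻¹ᵁ j'.opensRange := by rw [this]; trivial
    exact hp
  obtain ⟨ψ, hψ⟩ := factor q j' hj' (g ≫ τ) (by rw [Category.assoc, hτq, hgq]) hgr
  let e : O := ∑ i ∈ I, co' i * ψ (b i)
  have hte : t e = (t.comp ψ) ft := by
    simp [e, ft]
  have hte0 : t e ≠ 0 := by
    rw [hte]
    obtain ⟨a, ha, hay⟩ := hyN
    have h1 : j' ((Spec.map (CommRingCat.ofHom (t.comp ψ).toRingHom)) z) = τ y := by
      have : Spec.map (CommRingCat.ofHom (t.comp ψ).toRingHom) =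
        Spec.map (CommRingCat.ofHom t.toRingHom) ≫ Spec.map (CommRingCat.ofHom ψ.toRingHom) := by
        rw [← Spec.map_comp]; rfl
      rw [this, ← Scheme.Hom.comp_apply, Category.assoc, hψ, Scheme.Hom.comp_apply,
        Scheme.Hom.comp_apply]
    have h2 := j'.isOpenEmbedding.injective (hay.trans h1.symm)
    exact (mem_basicOpen_of_map (t.comp ψ).toRingHom ft z).1 (h2 ▸ ha)
  have he0 : e ≠ 0 := by
    intro h
    rw [h, map_zero] at hte0
    exact hte0 rfl
  have hιe : ι e ≠ 0 := by
    rw [Ne, map_eq_zero_iff ι hι]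
    exact he0
  have hx := hc L α' (ι.comp ψ) (ξ ≫ τX) (by rw [Category.assoc, hτs]; exact hα.symm) (by
    rw [Category.assoc, hτπ, ← Category.assoc, ← hgξ, Category.assoc, ← hψ, ← Category.assoc,
      ← Spec.map_comp]
    rfl)
  refine ⟨τX w, ?_, n, hτX w⟩
  let zL : Spec (CommRingCat.of L) := Classical.arbitrary (PrimeSpectrum L)
  have h3 : τX w = (ξ ≫ τX) zL := by rw [Scheme.Hom.comp_apply, hξ]
  rw [h3, hx, Scheme.Hom.comp_apply]
  apply hf2
  refine (mem_basicOpen_of_map _ f zL).2 ?_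
  have h4 : (Algebra.TensorProduct.lift α' (ι.comp ψ) (fun _ _ => Commute.all _ _)) f = ι e := by
    rw [hfs, map_sum, map_sum]
    refine Finset.sum_congr rfl fun i hi => ?_
    rw [Algebra.TensorProduct.lift_tmul, map_mul, (hco' i hi).1]
    rfl
  exact fun h => hιe (h4.symm.trans h)

theorem orbit_image {X Y : Scheme.{u}} {Z W : Scheme.{u}} (σ : Y ≅ Y) (q : Y ⟶ Z)
    (hσ : σ.hom ≫ q = q)
    (π : X ⟶ Y) (s : X ⟶ W) (σX : X ≅ X) (h₁ : σX.hom ≫ π = π ≫ σ.hom) (h₂ : σX.hom ≫ s = s)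
    (x : X) : orbit σ (π x) = π '' orbit σX x := by
  rw [orbit, orbit, ← Set.range_comp]
  congr 1
  ext n
  obtain ⟨τ, τX, -, hτπ, -, hτ, hτX⟩ := iter_hom σ q hσ π s σX h₁ h₂ n
  simp only [Function.comp_apply, hτ, hτX]
  rw [← Scheme.Hom.comp_apply, ← hτπ, Scheme.Hom.comp_apply]

/-- Lemma 5.6 of the paper. Let `k ⊆ ℓ` be algebraically closed uncountable
fields, `Y` an integral scheme of finite type over `k` with `k`-automorphism `σ`, and let
`X = Y ×_{Spec k} Spec ℓ` with induced automorphism `σX = σ ×_k id_ℓ`. Then `(X, σX)` has good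
dense orbits if and only if `(Y, σ)` has good dense orbits. -/
theorem statement7 (k : Type u) [Field k] [IsAlgClosed k] [Uncountable k]
    (ℓ : Type u) [Field ℓ] [IsAlgClosed ℓ] [Uncountable ℓ] [Algebra k ℓ]
    (Y : Scheme.{u}) (q : Y ⟶ Spec (CommRingCat.of k))
    [IsIntegral Y] [LocallyOfFiniteType q] [QuasiCompact q]
    (σ : Y ≅ Y) (hσ : σ.hom ≫ q = q)
    (X : Scheme.{u}) (π : X ⟶ Y) (s : X ⟶ Spec (CommRingCat.of ℓ))
    (hpb : IsPullback π s q (Spec.map (CommRingCat.ofHom (algebraMap k ℓ))))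
    (σX : X ≅ X) (hσX₁ : σX.hom ≫ π = π ≫ σ.hom) (hσX₂ : σX.hom ≫ s = s) :
    GoodDenseOrbits σX ↔ GoodDenseOrbits σ := by
  have hsurj : Surjective π := by
    have : Surjective (Spec.map (CommRingCat.ofHom (algebraMap k ℓ))) :=
      ⟨fun x => ⟨Classical.arbitrary (PrimeSpectrum ℓ), Subsingleton.elim
        (α := PrimeSpectrum k) _ _⟩⟩
    exact MorphismProperty.of_isPullback (P := @Surjective) hpb.flip this
  have hopen : IsOpenMap π := by
    have h1 : Subsingleton (Spec (CommRingCat.of k)) :=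
      inferInstanceAs (Subsingleton (PrimeSpectrum k))
    have : UniversallyOpen (Spec.map (CommRingCat.ofHom (algebraMap k ℓ))) := inferInstance
    have : UniversallyOpen π := MorphismProperty.of_isPullback (P := @UniversallyOpen) hpb.flip this
    exact π.isOpenMap
  have hdense : ∀ x : X, Dense (orbit σX x) → Dense (orbit σ (π x)) := by
    intro x hx
    rw [orbit_image σ q hσ π s σX hσX₁ hσX₂]
    exact hsurj.surj.denseRange.dense_image π.continuous hx
  constructor
  · intro hX
    have hX' : IsOpen { x : X | Dense (orbit σX x) } := hX
    have heq : { y : Y | Dense (orbit σ y) } = π '' { x : X | Dense (orbit σX x) } := by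
      apply Set.Subset.antisymm
      · intro y hy
        -- a point of `X` with dense orbit
        have hne : (π '' { x : X | Dense (orbit σX x) }).Nonempty := by
          obtain ⟨A, _, _, j, _, hj, _, -, hyj, -⟩ := chart q y _ isOpen_univ trivial
          obtain ⟨c, -, hcr⟩ := chartX hpb j hj
          have := alg3 k ℓ A
          refine ⟨_, c (⊥ : PrimeSpectrum (ℓ ⊗[k] A)), ?_, rfl⟩
          change Dense _
          rw [dense_iff_inter_open]
          intro V hV hVn
          refine ⟨_, ?_, 0, rfl⟩
          have h1 : (π '' V ∩ Set.range j).Nonempty :=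
            nonempty_preirreducible_inter (hopen _ hV) j.isOpenEmbedding.isOpen_range
              (hVn.image _) ⟨_, hyj⟩
          obtain ⟨_, ⟨v, hv, rfl⟩, hvj⟩ := h1
          obtain ⟨v', rfl⟩ := hcr v hvj
          have hs : (⊥ : PrimeSpectrum (ℓ ⊗[k] A)) ⤳ v' :=
            (PrimeSpectrum.le_iff_specializes _ _).1 bot_le
          exact (hs.map c.continuous).mem_open hV hv
        obtain ⟨_, ⟨x, hx, hxe⟩, n, rfl⟩ := dense_iff_inter_open.1 hy _ (hopen _ hX') hne
        obtain ⟨τ, τX, -, hτπ, -, hτ, hτX⟩ := iter_hom σ q hσ π s σX hσX₁ hσX₂ (-n)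
        refine ⟨iter σX (-n) x, ?_, ?_⟩
        · change Dense _
          rw [orbit_iter]
          exact hx
        · rw [hτX, ← Scheme.Hom.comp_apply, hτπ, Scheme.Hom.comp_apply, hxe, ← hτ]
          simp only [iter_add, neg_add_cancel]
          rfl
      · rintro _ ⟨x, hx, rfl⟩
        exact hdense x hx
    change IsOpen _
    rw [heq]
    exact hopen _ hX'
  · intro hY
    have heq : { x : X | Dense (orbit σX x) } = π ⁻¹' { y : Y | Dense (orbit σ y) } := by
      ext x
      exact ⟨hdense x, key7 k ℓ Y q σ hσ X π s hpb σX hσX₁ hσX₂ hY x⟩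
    change IsOpen _
    rw [heq]
    exact IsOpen.preimage π.continuous hY

end ThcrDM
end
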